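/- arXiv:2110.14948 — 3 statements merged into one kernel-verified Lean document; each statement's English description precedes it below -/
import Mathlib

section
/- For every sequence of parameters (p_k, ε_k, m_k) with p_k → 0, 0 < ε_k < p_k, and m_k·ε_k²/p_k → 0, the following holds for all k large enough. Let q be a random bias equal to p_k with probability 1/2 and to p_k − ε_k otherwise; conditionally on q, let ℓ ~ Bin(m_k, q). Define the likelihood ratio R(ℓ) = p_k^ℓ (1−p_k)^{m_k−ℓ} / ( (p_k−ε_k)^ℓ (1−p_k+ε_k)^{m_k−ℓ} ). Then P( 98/100 ≤ R(ℓ) ≤ 100/98 ) ≥ 99/100. -/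
open MeasureTheory ProbabilityTheory Filter

/-!
The chi-squared divergence between the two binomial laws tensorizes: with `r = p - ε` it equals
`(1 + (p - r)² / (p (1 - p)))ᵐ - 1`, which tends to zero with `m (p - r)² / p` as long as `p` stays
away from `1`. Where the reciprocal ratio `R⁻¹` is at distance more than `δ` from `1`, the average
of the two weights is at most `2 / δ²` times the corresponding summand of the divergence, so a
Chebyshev-type bound holds under the mixture itself.
-/

section Likelihood

/-- The likelihood of the bias `q` given a particular sequence of `m` Bernoulli trials with `j`
successes; the number of such sequences, `m.choose j`, is not included. -/
noncomputable def bernoulliLikelihood (q : ℝ) (m j : ℕ) : ℝ := q ^ j * (1 - q) ^ (m - j)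

theorem bernoulliLikelihood_nonneg {q : ℝ} (hq : q ∈ Set.Icc 0 1) (m j : ℕ) :
    0 ≤ bernoulliLikelihood q m j :=
  mul_nonneg (pow_nonneg hq.1 _) (pow_nonneg (sub_nonneg.mpr hq.2) _)

theorem bernoulliLikelihood_pos {q : ℝ} (hq : q ∈ Set.Ioo 0 1) (m j : ℕ) :
    0 < bernoulliLikelihood q m j :=
  mul_pos (pow_pos hq.1 _) (pow_pos (sub_pos.mpr hq.2) _)

theorem sum_choose_mul_bernoulliLikelihood (q : ℝ) (m : ℕ) :
    ∑ j ∈ Finset.range (m + 1), m.choose j * bernoulliLikelihood q m j = 1 := by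
  calc ∑ j ∈ Finset.range (m + 1), m.choose j * bernoulliLikelihood q m j
      = (q + (1 - q)) ^ m := by
        rw [add_pow]
        exact Finset.sum_congr rfl fun j _ => mul_comm _ _
    _ = 1 := by rw [add_sub_cancel, one_pow]

theorem sum_choose_mul_bernoulliLikelihood_sq_div (p r : ℝ) (m : ℕ) :
    ∑ j ∈ Finset.range (m + 1),
        m.choose j * (bernoulliLikelihood r m j ^ 2 / bernoulliLikelihood p m j) =
      (r ^ 2 / p + (1 - r) ^ 2 / (1 - p)) ^ m := by
  rw [add_pow]
  refine Finset.sum_congr rfl fun j _ => ?_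
  simp only [bernoulliLikelihood, div_pow, mul_pow, pow_right_comm _ _ 2]
  rw [div_mul_div_comm, mul_comm]

theorem sum_choose_mul_bernoulliLikelihood_sub_sq_div {p : ℝ} (hp : p ∈ Set.Ioo 0 1) (r : ℝ)
    (m : ℕ) :
    ∑ j ∈ Finset.range (m + 1), m.choose j *
        ((bernoulliLikelihood r m j - bernoulliLikelihood p m j) ^ 2 /
          bernoulliLikelihood p m j) =
      (1 + (p - r) ^ 2 / (p * (1 - p))) ^ m - 1 := by
  have expand (j : ℕ) : m.choose j *
        ((bernoulliLikelihood r m j - bernoulliLikelihood p m j) ^ 2 /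
          bernoulliLikelihood p m j) =
      m.choose j * (bernoulliLikelihood r m j ^ 2 / bernoulliLikelihood p m j) -
        2 * (m.choose j * bernoulliLikelihood r m j) +
        m.choose j * bernoulliLikelihood p m j := by
    have := (bernoulliLikelihood_pos hp m j).ne'
    field_simp
    ring
  have base : r ^ 2 / p + (1 - r) ^ 2 / (1 - p) = 1 + (p - r) ^ 2 / (p * (1 - p)) := by
    have := hp.1.ne'
    have := (sub_pos.mpr hp.2).ne'
    field_simp
    ring
  simp only [expand, Finset.sum_add_distrib, Finset.sum_sub_distrib, ← Finset.mul_sum,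
    sum_choose_mul_bernoulliLikelihood, sum_choose_mul_bernoulliLikelihood_sq_div, base]
  ring

end Likelihood

theorem add_div_two_le_of_lt_abs_div_sub_one {a b δ : ℝ} (ha : 0 < a) (hδ : 0 < δ) (hδ1 : δ ≤ 1)
    (h : δ < |b / a - 1|) : (a + b) / 2 ≤ 2 / δ ^ 2 * ((b - a) ^ 2 / a) := by
  let u := |b / a - 1| / δ
  have one_le_u : 1 ≤ u := (one_le_div hδ).mpr h.le
  have sub_one_le_u : b / a - 1 ≤ u := (le_abs_self _).trans (le_div_self (abs_nonneg _) hδ hδ1)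
  calc (a + b) / 2 = a * (1 + (b / a - 1) / 2) := by field_simp; ring
    _ ≤ a * (2 * u ^ 2) := by gcongr; nlinarith
    _ = 2 / δ ^ 2 * ((b - a) ^ 2 / a) := by
      simp only [u, div_pow, sq_abs]
      field_simp

section Measure

variable {Ω : Type*} [MeasurableSpace Ω] {μ : Measure Ω}

theorem measure_preimage_le_tsum {β : Type*} [Countable β] {f : Ω → β} {s : Set β}
    {w : β → ENNReal} (hw : ∀ b ∈ s, μ (f ⁻¹' {b}) ≤ w b) : μ (f ⁻¹' s) ≤ ∑' b, w b :=
  calc μ (f ⁻¹' s) = μ (⋃ b ∈ s, f ⁻¹' {b}) := by rw [Set.biUnion_preimage_singleton]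
    _ ≤ ∑' b : s, μ (f ⁻¹' {↑b}) := measure_biUnion_le μ s.to_countable _
    _ ≤ ∑' b : s, w b := ENNReal.tsum_le_tsum fun b => hw b b.2
    _ ≤ ∑' b, w b := ENNReal.tsum_comp_le_tsum_of_injective Subtype.val_injective w

theorem le_measure_of_measure_compl_le_one_sub [IsProbabilityMeasure μ] {s : Set Ω} {c : ENNReal}
    (hc : c ≤ 1) (h : μ sᶜ ≤ 1 - c) : c ≤ μ s :=
  calc c = 1 - (1 - c) := (ENNReal.sub_sub_cancel ENNReal.one_ne_top hc).symm
    _ ≤ 1 - μ sᶜ := tsub_le_tsub_left h 1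
    _ ≤ μ s := tsub_le_iff_right.mpr (measure_univ (μ := μ) ▸ measure_univ_le_add_compl s)

/-- Under `μ`, the random bias `q` equals `p` or `r` with probability `1 / 2` each, and `ℓ` is
conditionally binomial with parameters `m` and `q`. The joint law is given by its point masses, and
neither `q` nor `ℓ` is assumed to be measurable. -/
structure IsBinomialMixture (μ : Measure Ω) (p r : ℝ) (m : ℕ) (q : Ω → ℝ) (ℓ : Ω → ℕ) : Prop where
  bias_eq_or (ω : Ω) : q ω = p ∨ q ω = r
  measure_left (j : ℕ) : μ {ω | q ω = p ∧ ℓ ω = j} =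
    (1 / 2) * ENNReal.ofReal (m.choose j * bernoulliLikelihood p m j)
  measure_right (j : ℕ) : μ {ω | q ω = r ∧ ℓ ω = j} =
    (1 / 2) * ENNReal.ofReal (m.choose j * bernoulliLikelihood r m j)

namespace IsBinomialMixture

variable {p r : ℝ} {m : ℕ} {q : Ω → ℝ} {ℓ : Ω → ℕ}

theorem measure_preimage_singleton_le (h : IsBinomialMixture μ p r m q ℓ)
    (hp : p ∈ Set.Icc 0 1) (hr : r ∈ Set.Icc 0 1) (j : ℕ) :
    μ (ℓ ⁻¹' {j}) ≤ ENNReal.ofReal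
      (m.choose j * ((bernoulliLikelihood p m j + bernoulliLikelihood r m j) / 2)) := by
  have cover : ℓ ⁻¹' {j} ⊆ {ω | q ω = p ∧ ℓ ω = j} ∪ {ω | q ω = r ∧ ℓ ω = j} := fun ω hω =>
    (h.bias_eq_or ω).imp (⟨·, hω⟩) (⟨·, hω⟩)
  have half : (1 / 2 : ENNReal) = ENNReal.ofReal (1 / 2) := by
    rw [ENNReal.ofReal_div_of_pos two_pos, ENNReal.ofReal_one, ENNReal.ofReal_ofNat]
  have hLp := bernoulliLikelihood_nonneg hp m j
  have hLr := bernoulliLikelihood_nonneg hr m j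
  calc μ (ℓ ⁻¹' {j}) ≤ μ {ω | q ω = p ∧ ℓ ω = j} + μ {ω | q ω = r ∧ ℓ ω = j} :=
        (measure_mono cover).trans (measure_union_le _ _)
    _ = ENNReal.ofReal
          (m.choose j * ((bernoulliLikelihood p m j + bernoulliLikelihood r m j) / 2)) := by
      rw [h.measure_left, h.measure_right, ← mul_add,
        ← ENNReal.ofReal_add (by positivity) (by positivity), half,
        ← ENNReal.ofReal_mul (by norm_num)]
      ring_nf

theorem measure_lt_abs_likelihoodRatio_sub_one_le (h : IsBinomialMixture μ p r m q ℓ)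
    (hp : p ∈ Set.Ioo 0 1) (hr : r ∈ Set.Icc 0 1) {δ : ℝ} (hδ : 0 < δ) (hδ1 : δ ≤ 1) :
    μ {ω | δ < |bernoulliLikelihood r m (ℓ ω) / bernoulliLikelihood p m (ℓ ω) - 1|} ≤
      ENNReal.ofReal (2 / δ ^ 2 * ((1 + (p - r) ^ 2 / (p * (1 - p))) ^ m - 1)) := by
  let summand (j : ℕ) : ℝ := m.choose j *
    ((bernoulliLikelihood r m j - bernoulliLikelihood p m j) ^ 2 / bernoulliLikelihood p m j)
  have summand_nonneg (j : ℕ) : 0 ≤ summand j :=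
    mul_nonneg (Nat.cast_nonneg _)
      (div_nonneg (sq_nonneg _) (bernoulliLikelihood_pos hp m j).le)
  have summand_eq_zero (j : ℕ) (hj : j ∉ Finset.range (m + 1)) : summand j = 0 := by
    have : m < j := by simpa using hj
    simp [summand, Nat.choose_eq_zero_of_lt this]
  have fibre_le (j : ℕ)
      (hj : δ < |bernoulliLikelihood r m j / bernoulliLikelihood p m j - 1|) :
      μ (ℓ ⁻¹' {j}) ≤ ENNReal.ofReal (2 / δ ^ 2 * summand j) := by
    refine (h.measure_preimage_singleton_le (Set.Ioo_subset_Icc_self hp) hr j).trans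
      (ENNReal.ofReal_le_ofReal ?_)
    rw [mul_left_comm]
    gcongr
    exact add_div_two_le_of_lt_abs_div_sub_one (bernoulliLikelihood_pos hp m j) hδ hδ1 hj
  calc μ {ω | δ < |bernoulliLikelihood r m (ℓ ω) / bernoulliLikelihood p m (ℓ ω) - 1|}
      ≤ ∑' j, ENNReal.ofReal (2 / δ ^ 2 * summand j) := measure_preimage_le_tsum fibre_le
    _ = ∑ j ∈ Finset.range (m + 1), ENNReal.ofReal (2 / δ ^ 2 * summand j) :=
        tsum_eq_sum fun j hj => by rw [summand_eq_zero j hj, mul_zero, ENNReal.ofReal_zero]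
    _ = ENNReal.ofReal (2 / δ ^ 2 * ((1 + (p - r) ^ 2 / (p * (1 - p))) ^ m - 1)) := by
        rw [← ENNReal.ofReal_sum_of_nonneg fun j _ => mul_nonneg (by positivity) (summand_nonneg j),
          ← Finset.mul_sum, sum_choose_mul_bernoulliLikelihood_sub_sq_div hp]

end IsBinomialMixture

end Measure

section Limits

variable {ι : Type*} {l : Filter ι}

theorem tendsto_one_add_pow_nhds_one {x : ι → ℝ} {m : ι → ℕ} (hx : ∀ᶠ i in l, 0 ≤ x i)
    (h : Tendsto (fun i => m i * x i) l (nhds 0)) :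
    Tendsto (fun i => (1 + x i) ^ m i) l (nhds 1) := by
  have exp_tendsto : Tendsto (fun i => Real.exp (m i * x i)) l (nhds 1) := by
    rw [← Real.exp_zero]
    exact (Real.continuous_exp.tendsto 0).comp h
  refine tendsto_of_tendsto_of_tendsto_of_le_of_le' tendsto_const_nhds exp_tendsto ?_ ?_
  · filter_upwards [hx] with i hi using one_le_pow₀ (by linarith)
  · filter_upwards [hx] with i hi
    rw [Real.exp_nat_mul]
    gcongr
    linarith [Real.add_one_le_exp (x i)]

theorem tendsto_binomial_chiSq_nhds_zero {p r : ι → ℝ} {m : ι → ℕ} {c : ℝ} (hc : c < 1)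
    (hp : ∀ᶠ i in l, p i ∈ Set.Ioc 0 c)
    (hm : Tendsto (fun i => m i * (p i - r i) ^ 2 / p i) l (nhds 0)) :
    Tendsto (fun i => (1 + (p i - r i) ^ 2 / (p i * (1 - p i))) ^ m i - 1) l (nhds 0) := by
  have nonneg : ∀ᶠ i in l, 0 ≤ (p i - r i) ^ 2 / (p i * (1 - p i)) := by
    filter_upwards [hp] with i hi
    exact div_nonneg (sq_nonneg _) (mul_nonneg hi.1.le (by linarith [hi.2]))
  have le_bound : ∀ᶠ i in l, m i * ((p i - r i) ^ 2 / (p i * (1 - p i))) ≤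
      m i * (p i - r i) ^ 2 / p i / (1 - c) := by
    filter_upwards [hp] with i ⟨hi, hic⟩
    rw [← mul_div_assoc, ← div_div]
    gcongr
  have bound_tendsto : Tendsto (fun i => m i * (p i - r i) ^ 2 / p i / (1 - c)) l (nhds 0) := by
    simpa only [zero_div] using hm.div_const (1 - c)
  have pow_tendsto := tendsto_one_add_pow_nhds_one nonneg <|
    squeeze_zero' (nonneg.mono fun i hi => mul_nonneg (m i).cast_nonneg hi) le_bound bound_tendsto
  simpa only [sub_self] using pow_tendsto.sub_const 1

end Limits

theorem exists_forall_inv_mem_Icc_of_abs_sub_one_le {a b : ℝ} (ha : a < 1) (hb : 1 < b) :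
    ∃ δ, 0 < δ ∧ δ ≤ 1 ∧ ∀ t : ℝ, |t - 1| ≤ δ → t⁻¹ ∈ Set.Icc a b := by
  have mem_nhds : ∀ᶠ t : ℝ in nhds 1, t⁻¹ ∈ Set.Icc a b :=
    (continuousAt_inv₀ one_ne_zero).eventually_mem (Icc_mem_nhds (by simpa) (by simpa))
  obtain ⟨δ, hδ, ball⟩ := Metric.nhds_basis_closedBall.eventually_iff.mp mem_nhds
  exact ⟨min δ 1, lt_min hδ one_pos, min_le_right _ _,
    fun t ht => ball (ht.trans (min_le_left _ _))⟩

theorem bernoulli_likelihood_ratio_concentration_general {ι : Type*} {l : Filter ι}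
    {p r : ι → ℝ} {m : ι → ℕ} {c : ℝ} (hc : c < 1)
    (hp : ∀ᶠ i in l, p i ∈ Set.Ioc 0 c) (hr : ∀ᶠ i in l, r i ∈ Set.Icc 0 1)
    (hm : Tendsto (fun i => m i * (p i - r i) ^ 2 / p i) l (nhds 0))
    {a b : ℝ} (ha : a < 1) (hb : 1 < b) {η : ENNReal} (hη : η < 1) :
    ∀ᶠ i in l, ∀ (Ω : Type*) (_ : MeasurableSpace Ω) (μ : Measure Ω) (_ : IsProbabilityMeasure μ)
      (q : Ω → ℝ) (ℓ : Ω → ℕ), IsBinomialMixture μ (p i) (r i) (m i) q ℓ →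
      η ≤ μ {ω | bernoulliLikelihood (p i) (m i) (ℓ ω) / bernoulliLikelihood (r i) (m i) (ℓ ω) ∈
        Set.Icc a b} := by
  obtain ⟨δ, hδ, hδ1, inv_mem⟩ := exists_forall_inv_mem_Icc_of_abs_sub_one_le ha hb
  have bound_tendsto : Tendsto (fun i => ENNReal.ofReal
      (2 / δ ^ 2 * ((1 + (p i - r i) ^ 2 / (p i * (1 - p i))) ^ m i - 1))) l (nhds 0) := by
    simpa using ENNReal.tendsto_ofReal
      ((tendsto_binomial_chiSq_nhds_zero hc hp hm).const_mul (2 / δ ^ 2))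
  filter_upwards [hp, hr, bound_tendsto.eventually_le_const (tsub_pos_of_lt hη)]
    with i hpi hri bound_le Ω _ μ _ q ℓ h
  have compl_subset : {ω | bernoulliLikelihood (p i) (m i) (ℓ ω) /
        bernoulliLikelihood (r i) (m i) (ℓ ω) ∈ Set.Icc a b}ᶜ ⊆
      {ω | δ < |bernoulliLikelihood (r i) (m i) (ℓ ω) /
        bernoulliLikelihood (p i) (m i) (ℓ ω) - 1|} := by
    intro ω hω
    contrapose! hω
    simpa only [Set.mem_compl_iff, not_not, Set.mem_ofPred_eq, inv_div] using
      inv_mem _ (not_lt.mp hω)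
  have measure_far_le :=
    h.measure_lt_abs_likelihoodRatio_sub_one_le ⟨hpi.1, hpi.2.trans_lt hc⟩ hri hδ hδ1
  exact le_measure_of_measure_compl_le_one_sub hη.le
    ((measure_mono compl_subset).trans (measure_far_le.trans bound_le))

/-- (Likelihood-ratio concentration for Bernoulli-bias discrimination.)
For parameter sequences `(p_k, ε_k, m_k)` with `p_k → 0`, `0 < ε_k < p_k` and
`m_k·ε_k²/p_k → 0`, the following holds for all `k` large enough.  Let the bias `q` be
`p_k` or `p_k − ε_k` each with probability `1/2`, and conditionally on `q` let
`ℓ ~ Bin(m_k, q)`.  Then the likelihood ratio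
`R(ℓ) = p_k^ℓ (1−p_k)^{m_k−ℓ} / ((p_k−ε_k)^ℓ (1−p_k+ε_k)^{m_k−ℓ})` lies in
`[98/100, 100/98]` with probability at least `99/100`. -/
theorem bernoulli_likelihood_ratio_concentration
    (p ε : ℕ → ℝ) (m : ℕ → ℕ)
    (hp : Tendsto p atTop (nhds 0))
    (hε : ∀ k, 0 < ε k ∧ ε k < p k)
    (hm : Tendsto (fun k => (m k : ℝ) * (ε k) ^ 2 / p k) atTop (nhds 0)) :
    ∀ᶠ k in atTop,
      ∀ (Ω : Type) (_ : MeasurableSpace Ω) (μ : Measure Ω) (_ : IsProbabilityMeasure μ)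
        (q : Ω → ℝ) (ℓ : Ω → ℕ),
        (∀ ω, q ω = p k ∨ q ω = p k - ε k) →
        (∀ j : ℕ, μ {ω | q ω = p k ∧ ℓ ω = j} =
          (1 / 2) * ENNReal.ofReal
            (((m k).choose j : ℝ) * (p k) ^ j * (1 - p k) ^ (m k - j))) →
        (∀ j : ℕ, μ {ω | q ω = p k - ε k ∧ ℓ ω = j} =
          (1 / 2) * ENNReal.ofReal
            (((m k).choose j : ℝ) * (p k - ε k) ^ j * (1 - p k + ε k) ^ (m k - j))) →
        ∀ R : ℕ → ℝ,
          (∀ l : ℕ, R l = (p k) ^ l * (1 - p k) ^ (m k - l) /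
            ((p k - ε k) ^ l * (1 - p k + ε k) ^ (m k - l))) →
        (99 / 100 : ENNReal) ≤
          μ {ω | 98 / 100 ≤ R (ℓ ω) ∧ R (ℓ ω) ≤ 100 / 98} := by
  have p_le_half := hp.eventually_le_const (show (0 : ℝ) < 1 / 2 by norm_num)
  have p_mem : ∀ᶠ k in atTop, p k ∈ Set.Ioc 0 (1 / 2) :=
    p_le_half.mono fun k hk => ⟨(hε k).1.trans (hε k).2, hk⟩
  have r_mem : ∀ᶠ k in atTop, p k - ε k ∈ Set.Icc 0 1 :=
    p_le_half.mono fun k hk => ⟨(sub_pos.mpr (hε k).2).le, by linarith [(hε k).1]⟩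
  have scaled_sq_tendsto :
      Tendsto (fun k => m k * (p k - (p k - ε k)) ^ 2 / p k) atTop (nhds 0) := by
    simpa only [sub_sub_cancel] using hm
  filter_upwards [bernoulli_likelihood_ratio_concentration_general one_half_lt_one p_mem r_mem
    scaled_sq_tendsto (a := 98 / 100) (b := 100 / 98) (η := 99 / 100) (by norm_num) (by norm_num)
    (ENNReal.div_lt_of_lt_mul (by norm_num))] with k general Ω _ μ hμ q ℓ hq h₁ h₂ R hR
  simp only [sub_add, mul_assoc] at h₁ h₂ hR
  simp only [hR]
  exact general Ω _ μ hμ q ℓ ⟨hq, h₁, h₂⟩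
end

section
/- For every sequence of parameters (n_k, ε_k, m_k) with n_k → ∞, 1/√(n_k) ≤ ε_k < 1/3, (1−ε_k)·n_k a positive integer, and m_k·ε_k/√(n_k) → 0, the following holds for all k large enough. Let N be equal to n_k with probability 1/2 and to (1−ε_k)·n_k otherwise; conditionally on N, draw m_k i.i.d. uniform samples X₁, …, X_{m_k} from a set of size N, and let Π be the partition of the index set {1, …, m_k} into blocks of equal samples (i.e., i and j lie in the same block iff X_i = X_j). Then for every function g mapping partitions of {1, …, m_k} to {n_k, (1−ε_k)·n_k}, the probability of correct identification satisfies P( g(Π) = N ) ≤ 3/5. In particular, no algorithm in the proportional-sampling model taking m_k = o(√(n_k)/ε_k) samples can output a (1±ε_k)-approximation of the total weight with probability 2/3 on all instances with |U| = n_k, even knowing n_k. -/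
open MeasureTheory ProbabilityTheory Filter

/-!
Conditionally on `N`, the number of blocks is a sufficient statistic for the partition: a partition
into `b` blocks is induced by `N (N - 1) ⋯ (N - b + 1)` of the `N ^ m` samples. The likelihood ratio
of the two hypotheses, evaluated along the samples, is therefore a martingale driven by the block
count, and each further sample multiplies its second moment by at most `1 + O(ε² m / n)`. After `m`
samples its variance is at most `exp (O(m² ε² / n)) - 1 → 0`, so by Cauchy–Schwarz no test on
partitions has an advantage bounded away from `0`.
-/

open scoped BigOperators

section Partitions

variable {ι α : Type*}

/-- The number of blocks of the partition of `ι` encoded by the equivalence relation `s`. -/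
noncomputable def numBlocks (s : Setoid ι) : ℕ := Nat.card (Quotient s)

lemma numBlocks_le_card [Fintype ι] (s : Setoid ι) : numBlocks s ≤ Fintype.card ι := by
  simpa only [numBlocks, Nat.card_eq_fintype_card] using
    Nat.card_le_card_of_surjective (Quotient.mk s) Quotient.mk_surjective

lemma numBlocks_ker [Fintype ι] [DecidableEq α] (v : ι → α) :
    numBlocks (Setoid.ker v) = (Finset.univ.image v).card := by
  rw [numBlocks, Nat.card_congr (Setoid.quotientKerEquivRange v), Nat.card_coe_set_eq,
    ← Set.ncard_coe_finset, Finset.coe_image, Finset.coe_univ, Set.image_univ]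

/-- Maps with kernel `s`, viewed as embeddings of the quotient by `s`. -/
def kerEqEquivEmbedding (s : Setoid ι) : {v : ι → α // Setoid.ker v = s} ≃ (Quotient s ↪ α) where
  toFun v := ⟨Quotient.lift v.1 v.2.ge, (Setoid.lift_injective_iff_ker_eq_of_le v.2.ge).2 v.2⟩
  invFun f := ⟨f ∘ Quotient.mk s, by
    ext i j
    rw [Setoid.ker_def, Function.comp_apply, Function.comp_apply, f.injective.eq_iff,
      Quotient.eq]⟩
  left_inv _ := rfl
  right_inv f := by
    ext ⟨i⟩
    rfl

lemma card_ker_eq [Finite ι] [Fintype α] (s : Setoid ι) :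
    Nat.card {v : ι → α // Setoid.ker v = s} = (Fintype.card α).descFactorial (numBlocks s) := by
  have : Fintype (Quotient s) := Fintype.ofFinite _
  rw [Nat.card_congr (kerEqEquivEmbedding s), Nat.card_eq_fintype_card,
    Fintype.card_embedding_eq, numBlocks, Nat.card_eq_fintype_card]

instance finite_setoid [Finite ι] : Finite (Setoid ι) :=
  Finite.of_injective (fun s : Setoid ι => (s : ι → ι → Prop)) fun _ _ h =>
    Setoid.ext fun i j => iff_of_eq (congrFun₂ h i j)

lemma sum_ker_eq_sum_setoid [Fintype ι] [DecidableEq ι] [Fintype α] [Fintype (Setoid ι)]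
    (F : Setoid ι → ℝ) :
    ∑ v : ι → α, F (Setoid.ker v) =
      ∑ s : Setoid ι, (Fintype.card α).descFactorial (numBlocks s) * F s := by
  classical
  rw [← Fintype.sum_fiberwise (fun v : ι → α => Setoid.ker v)]
  refine Finset.sum_congr rfl fun s _ => ?_
  rw [← card_ker_eq (α := α), Nat.card_eq_fintype_card, ← nsmul_eq_mul, ← Finset.card_univ,
    ← Finset.sum_const]
  exact Finset.sum_congr rfl fun v _ => by rw [v.2]

lemma expect_card_insert [Fintype α] [Nonempty α] [DecidableEq α] (s : Finset α) (h : ℕ → ℝ) :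
    𝔼 a, h (insert a s).card = s.card / Fintype.card α * h s.card +
      (1 - s.card / Fintype.card α) * h (s.card + 1) := by
  have old : ∑ a ∈ s, h (insert a s).card = s.card * h s.card := by
    rw [← nsmul_eq_mul, ← Finset.sum_const]
    exact Finset.sum_congr rfl fun a ha => by rw [Finset.insert_eq_of_mem ha]
  have new : ∑ a ∈ sᶜ, h (insert a s).card = (Fintype.card α - s.card) * h (s.card + 1) := by
    rw [← Nat.cast_sub s.card_le_univ, ← Finset.card_compl, ← nsmul_eq_mul, ← Finset.sum_const]
    exact Finset.sum_congr rfl fun a ha => by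
      rw [Finset.card_insert_of_notMem (Finset.mem_compl.1 ha)]
  rw [Fintype.expect_eq_sum_div_card, ← Finset.sum_add_sum_compl s, old, new]
  field_simp

lemma expect_numBlocks_cons [Fintype α] [Nonempty α] {m : ℕ} (v : Fin m → α) (h : ℕ → ℝ) :
    𝔼 a, h (numBlocks (Setoid.ker (Fin.cons a v : Fin (m + 1) → α))) =
      numBlocks (Setoid.ker v) / Fintype.card α * h (numBlocks (Setoid.ker v)) +
        (1 - numBlocks (Setoid.ker v) / Fintype.card α) * h (numBlocks (Setoid.ker v) + 1) := by
  classical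
  simp only [numBlocks_ker, ← expect_card_insert]
  refine Finset.expect_congr rfl fun a _ => ?_
  congr 2
  ext x
  simp [Fin.exists_fin_succ, eq_comm]

lemma expect_fin_succ_arrow [Fintype α] {m : ℕ} (F : (Fin (m + 1) → α) → ℝ) :
    𝔼 v, F v = 𝔼 v : Fin m → α, 𝔼 a, F (Fin.cons a v) := by
  rw [Finset.expect_comm, ← Finset.expect_product', Finset.univ_product_univ]
  exact (Fintype.expect_equiv (Fin.consEquiv fun _ => α) _ _ fun _ => rfl).symm

end Partitions

section LikelihoodRatio

variable {N N' m b : ℕ}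

/-- The likelihood ratio, of universe size `N'` against universe size `N`, of a given partition
of `m` samples into `b` blocks. It is meaningful for `b ≤ N`. -/
noncomputable def likelihoodRatio (N N' m b : ℕ) : ℝ :=
  (N / N') ^ m * (N'.descFactorial b / N.descFactorial b)

/-- The factor by which one more sample, drawn when `b` blocks have been seen, multiplies the
second moment of the likelihood ratio of universe size `N'` against `N`. -/
noncomputable def secondMomentGrowth (N N' b : ℕ) : ℝ :=
  1 + ((N : ℝ) - N') ^ 2 * b / (N' ^ 2 * (N - b))

lemma expect_ker_change_size {ι : Type*} [Fintype ι] [DecidableEq ι] (N' : ℕ)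
    (hN : Fintype.card ι ≤ N) (F : Setoid ι → ℝ) :
    𝔼 v : ι → Fin N', F (Setoid.ker v) =
      𝔼 v : ι → Fin N, likelihoodRatio N N' (Fintype.card ι) (numBlocks (Setoid.ker v)) *
        F (Setoid.ker v) := by
  have : Fintype (Setoid ι) := Fintype.ofFinite _
  simp only [Fintype.expect_eq_sum_div_card, Fintype.card_fun, Fintype.card_fin, Nat.cast_pow]
  rw [sum_ker_eq_sum_setoid,
    sum_ker_eq_sum_setoid fun s => likelihoodRatio N N' (Fintype.card ι) (numBlocks s) * F s,
    Finset.sum_div, Finset.sum_div]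
  refine Finset.sum_congr rfl fun s _ => ?_
  have hdesc : (N.descFactorial (numBlocks s) : ℝ) ≠ 0 := by
    exact_mod_cast (Nat.descFactorial_pos.2 ((numBlocks_le_card s).trans hN)).ne'
  have hpow : (N : ℝ) ^ Fintype.card ι ≠ 0 := by
    rcases N.eq_zero_or_pos with rfl | hpos
    · simp [Nat.le_zero.1 hN]
    · positivity
  simp only [Fintype.card_fin, likelihoodRatio, div_pow]
  field_simp

lemma likelihoodRatio_succ :
    likelihoodRatio N N' (m + 1) b = N / N' * likelihoodRatio N N' m b := by
  rw [likelihoodRatio, likelihoodRatio, pow_succ', mul_assoc]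

lemma likelihoodRatio_succ_succ (hb : b ≤ N) (hb' : b ≤ N') :
    likelihoodRatio N N' (m + 1) (b + 1) =
      N / N' * ((N' - b) / (N - b)) * likelihoodRatio N N' m b := by
  simp only [likelihoodRatio, pow_succ, Nat.descFactorial_succ, Nat.cast_mul, Nat.cast_sub hb,
    Nat.cast_sub hb', mul_div_mul_comm]
  ring

lemma likelihoodRatio_sq_step (hN' : 0 < N') (hb : b < N) (hb' : b ≤ N') :
    b / N * likelihoodRatio N N' (m + 1) b ^ 2 +
        (1 - b / N) * likelihoodRatio N N' (m + 1) (b + 1) ^ 2 =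
      secondMomentGrowth N N' b * likelihoodRatio N N' m b ^ 2 := by
  have hbN : (N : ℝ) - b ≠ 0 := (sub_pos.2 (by exact_mod_cast hb)).ne'
  have hN : (N : ℝ) ≠ 0 := by exact_mod_cast ((Nat.zero_le b).trans_lt hb).ne'
  rw [likelihoodRatio_succ, likelihoodRatio_succ_succ hb.le hb', secondMomentGrowth]
  field_simp
  ring

lemma secondMomentGrowth_mono {c : ℕ} (hbc : b ≤ c) (hc : c < N) :
    secondMomentGrowth N N' b ≤ secondMomentGrowth N N' c := by
  have hbc' : (b : ℝ) ≤ c := by exact_mod_cast hbc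
  have hcN : (0 : ℝ) < N - c := sub_pos.2 (by exact_mod_cast hc)
  rcases N'.eq_zero_or_pos with rfl | hN'
  · simp [secondMomentGrowth]
  · unfold secondMomentGrowth
    gcongr

lemma one_le_secondMomentGrowth (hb : b ≤ N) : 1 ≤ secondMomentGrowth N N' b := by
  have hbN : (0 : ℝ) ≤ N - b := sub_nonneg.2 (by exact_mod_cast hb)
  exact le_add_of_nonneg_right (by positivity)

lemma expect_likelihoodRatio_sq_le {M : ℕ} (hN' : 0 < N') (hM : M < N) (hM' : M ≤ N')
    (hm : m ≤ M) :
    𝔼 v : Fin m → Fin N, likelihoodRatio N N' m (numBlocks (Setoid.ker v)) ^ 2 ≤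
      secondMomentGrowth N N' M ^ m := by
  have : NeZero N := ⟨((Nat.zero_le M).trans_lt hM).ne'⟩
  induction m with
  | zero => simp [likelihoodRatio, numBlocks]
  | succ m ih =>
    rw [expect_fin_succ_arrow, pow_succ']
    calc
      _ = 𝔼 v : Fin m → Fin N, secondMomentGrowth N N' (numBlocks (Setoid.ker v)) *
            likelihoodRatio N N' m (numBlocks (Setoid.ker v)) ^ 2 := by
        refine Finset.expect_congr rfl fun v _ => ?_
        have hb : numBlocks (Setoid.ker v) ≤ m := by
          simpa only [Fintype.card_fin] using numBlocks_le_card (Setoid.ker v)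
        rw [expect_numBlocks_cons v fun b => likelihoodRatio N N' (m + 1) b ^ 2,
          Fintype.card_fin, likelihoodRatio_sq_step hN' (by lia) (by lia)]
      _ ≤ 𝔼 v : Fin m → Fin N, secondMomentGrowth N N' M *
            likelihoodRatio N N' m (numBlocks (Setoid.ker v)) ^ 2 := by
        refine Finset.expect_le_expect fun v _ => ?_
        have hb : numBlocks (Setoid.ker v) ≤ m := by
          simpa only [Fintype.card_fin] using numBlocks_le_card (Setoid.ker v)
        gcongr
        exact secondMomentGrowth_mono (by lia) hM
      _ = secondMomentGrowth N N' M *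
            𝔼 v : Fin m → Fin N, likelihoodRatio N N' m (numBlocks (Setoid.ker v)) ^ 2 :=
        (Finset.mul_expect ..).symm
      _ ≤ _ := by
        have := one_le_secondMomentGrowth (N' := N') hM.le
        gcongr
        exact ih (by lia)

end LikelihoodRatio

section Advantage

lemma expect_mul_sub_expect_le {κ : Type*} [Fintype κ] [Nonempty κ] {L f : κ → ℝ}
    (hL : 𝔼 x, L x = 1) (hf : ∀ x, f x ∈ Set.Icc 0 1) :
    𝔼 x, L x * f x - 𝔼 x, f x ≤ √(𝔼 x, L x ^ 2 - 1) / 2 := by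
  -- `L - 1` has mean zero, so centring `f` at `1 / 2` is free; it halves the Cauchy–Schwarz bound.
  have centre : 𝔼 x, L x * f x - 𝔼 x, f x = 𝔼 x, (L x - 1) * (f x - 1 / 2) := by
    have expand : ∀ x, (L x - 1) * (f x - 1 / 2) = L x * f x - f x - (L x * (1 / 2) - 1 / 2) :=
      fun x => by ring
    simp only [expand, Finset.expect_sub_distrib, ← Finset.expect_mul, hL, Fintype.expect_const]
    ring
  have variance : 𝔼 x, (L x - 1) ^ 2 = 𝔼 x, L x ^ 2 - 1 := by
    have expand : ∀ x, (L x - 1) ^ 2 = L x ^ 2 - L x * 2 + 1 := fun x => by ring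
    simp only [expand, Finset.expect_add_distrib, Finset.expect_sub_distrib, ← Finset.expect_mul,
      hL, Fintype.expect_const]
    ring
  have bounded : 𝔼 x, (f x - 1 / 2) ^ 2 ≤ (1 / 2) ^ 2 :=
    Finset.expect_le Finset.univ_nonempty fun x _ => by
      obtain ⟨h0, h1⟩ := hf x
      nlinarith
  have variance_nonneg : 0 ≤ 𝔼 x, (L x - 1) ^ 2 := Finset.expect_nonneg fun x _ => sq_nonneg _
  calc
    𝔼 x, L x * f x - 𝔼 x, f x = 𝔼 x, (L x - 1) * (f x - 1 / 2) := centre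
    _ ≤ √((𝔼 x, (L x - 1) ^ 2) * (1 / 2) ^ 2) :=
      Real.le_sqrt_of_sq_le ((Finset.expect_mul_sq_le_sq_mul_sq ..).trans (by gcongr))
    _ = √(𝔼 x, L x ^ 2 - 1) / 2 := by
      rw [Real.sqrt_mul variance_nonneg, Real.sqrt_sq (by norm_num), variance, mul_one_div]

variable {ι : Type*} [Fintype ι] [DecidableEq ι]

/-- The probability that the partition induced by independent uniform samples, indexed by `ι`,
from a set of size `N` lies in `A`. -/
noncomputable def partitionProb (N : ℕ) (A : Set (Setoid ι)) : ℝ :=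
  𝔼 v : ι → Fin N, A.indicator 1 (Setoid.ker v)

lemma partitionProb_nonneg (N : ℕ) (A : Set (Setoid ι)) : 0 ≤ partitionProb N A :=
  Finset.expect_nonneg fun _ _ => Set.indicator_nonneg (fun _ _ => zero_le_one) _

lemma partitionProb_compl {N : ℕ} (hN : 0 < N) (A : Set (Setoid ι)) :
    partitionProb N Aᶜ = 1 - partitionProb N A := by
  have : NeZero N := ⟨hN.ne'⟩
  simp only [partitionProb, Set.indicator_compl, Pi.sub_apply, Pi.one_apply,
    Finset.expect_sub_distrib, Fintype.expect_const]

lemma partitionProb_sub_le {N N' m : ℕ} (hN' : 0 < N') (hm : m < N) (hm' : m ≤ N')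
    (A : Set (Setoid (Fin m))) :
    partitionProb N' A - partitionProb N A ≤ √(secondMomentGrowth N N' m ^ m - 1) / 2 := by
  have : NeZero N := ⟨((Nat.zero_le m).trans_lt hm).ne'⟩
  have : NeZero N' := ⟨hN'.ne'⟩
  have change (F : Setoid (Fin m) → ℝ) : 𝔼 v : Fin m → Fin N', F (Setoid.ker v) =
      𝔼 v : Fin m → Fin N, likelihoodRatio N N' m (numBlocks (Setoid.ker v)) *
        F (Setoid.ker v) := by
    simpa only [Fintype.card_fin] using
      expect_ker_change_size N' (by simpa only [Fintype.card_fin] using hm.le) F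
  have mean : 𝔼 v : Fin m → Fin N, likelihoodRatio N N' m (numBlocks (Setoid.ker v)) = 1 := by
    simpa only [mul_one, Fintype.expect_const] using (change fun _ => 1).symm
  have range (v : Fin m → Fin N) : A.indicator 1 (Setoid.ker v) ∈ Set.Icc (0 : ℝ) 1 :=
    ⟨Set.indicator_nonneg (fun _ _ => zero_le_one) _,
      Set.indicator_le_self' (fun _ _ => zero_le_one) _⟩
  calc
    partitionProb N' A - partitionProb N A
      ≤ √(𝔼 v : Fin m → Fin N, likelihoodRatio N N' m (numBlocks (Setoid.ker v)) ^ 2 - 1) / 2 := by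
        rw [partitionProb, change]
        exact expect_mul_sub_expect_le mean range
    _ ≤ √(secondMomentGrowth N N' m ^ m - 1) / 2 := by
        gcongr
        exact expect_likelihoodRatio_sq_le hN' hm hm' le_rfl

end Advantage

section Identification

variable {Ω ι : Type*} [MeasurableSpace Ω] {μ : Measure Ω}

lemma measure_inter_preimage_le_tsum {β : Type*} [Countable β] (E : Set Ω) (Y : Ω → β)
    (B : Set β) : μ (E ∩ Y ⁻¹' B) ≤ ∑' y, B.indicator (fun y => μ (E ∩ Y ⁻¹' {y})) y := by
  rw [← tsum_subtype, ← Set.biUnion_preimage_singleton, Set.inter_iUnion₂]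
  exact measure_biUnion_le μ B.to_countable _

lemma measure_inter_samples_le_sum [Fintype ι] [DecidableEq ι] {r : ℕ} {c : ENNReal} {E : Set Ω}
    {X : ι → Ω → ℕ}
    (hX : ∀ v : ι → ℕ, μ {ω | ω ∈ E ∧ ∀ i, X i ω = v i} ≤ if ∀ i, v i < r then c else 0)
    (B : Set (ι → ℕ)) :
    μ {ω | ω ∈ E ∧ (fun i => X i ω) ∈ B} ≤
      ∑ v : ι → Fin r, B.indicator (fun _ => c) fun i => (v i : ℕ) := by
  let incl : (ι → Fin r) → ι → ℕ := fun v i => v i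
  have incl_injective : incl.Injective := fun v w h => funext fun i => Fin.ext (congrFun h i)
  have atom (v : ι → ℕ) :
      μ (E ∩ (fun ω i => X i ω) ⁻¹' {v}) ≤ if ∀ i, v i < r then c else 0 := by
    simpa only [Set.inter_def, Set.mem_preimage, Set.mem_singleton_iff, funext_iff] using hX v
  have supported : (B.indicator fun v => if ∀ i, v i < r then c else 0).support ⊆ Set.range incl :=
    fun v hv => by
      have hvr : ∀ i, v i < r := by
        by_contra h
        exact hv (by simp [h])
      exact ⟨fun i => ⟨v i, hvr i⟩, rfl⟩
  calc
    μ {ω | ω ∈ E ∧ (fun i => X i ω) ∈ B}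
      ≤ ∑' v, B.indicator (fun v => μ (E ∩ (fun ω i => X i ω) ⁻¹' {v})) v :=
        measure_inter_preimage_le_tsum E (fun ω i => X i ω) B
    _ ≤ ∑' v, B.indicator (fun v => if ∀ i, v i < r then c else 0) v :=
        ENNReal.tsum_le_tsum fun v => Set.indicator_le_indicator (atom v)
    _ = ∑ v : ι → Fin r, B.indicator (fun v => if ∀ i, v i < r then c else 0) (incl v) := by
        rw [← incl_injective.tsum_eq supported, tsum_fintype]
    _ = ∑ v : ι → Fin r, B.indicator (fun _ => c) (incl v) :=
        Finset.sum_congr rfl fun v _ => by by_cases hv : incl v ∈ B <;> simp [hv, incl]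

lemma sum_indicator_ker_eq_partitionProb [Fintype ι] [DecidableEq ι] {r : ℕ} (hr : 0 < r)
    (A : Set (Setoid ι)) :
    ∑ v : ι → Fin r, (Setoid.ker ⁻¹' A).indicator
        (fun _ => (r : ENNReal)⁻¹ ^ Fintype.card ι) (fun i => (v i : ℕ)) =
      ENNReal.ofReal (partitionProb r A) := by
  have hpow : (0 : ℝ) < r ^ Fintype.card ι := by positivity
  have ker_val (v : ι → Fin r) : Setoid.ker (fun i => (v i : ℕ)) = Setoid.ker v := by
    ext i j
    simp only [Setoid.ker_def, Fin.ext_iff]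
  have summand (v : ι → Fin r) : (Setoid.ker ⁻¹' A).indicator
      (fun _ => (r : ENNReal)⁻¹ ^ Fintype.card ι) (fun i => (v i : ℕ)) =
        (r : ENNReal)⁻¹ ^ Fintype.card ι * ENNReal.ofReal (A.indicator 1 (Setoid.ker v)) := by
    by_cases hv : Setoid.ker v ∈ A <;> simp [ker_val, hv]
  have indicator_nonneg (v : ι → Fin r) : (0 : ℝ) ≤ A.indicator 1 (Setoid.ker v) :=
    Set.indicator_nonneg (fun _ _ => zero_le_one) _
  simp only [summand, ← Finset.mul_sum]
  rw [← ENNReal.ofReal_sum_of_nonneg fun v _ => indicator_nonneg v,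
    partitionProb, Fintype.expect_eq_sum_div_card, Fintype.card_fun, Fintype.card_fin,
    Nat.cast_pow, ENNReal.ofReal_div_of_pos hpow, ENNReal.ofReal_pow (Nat.cast_nonneg r),
    ENNReal.ofReal_natCast, ENNReal.div_eq_inv_mul, ENNReal.inv_pow]

lemma measure_inter_ker_mem_le [Fintype ι] [DecidableEq ι] {r : ℕ} (hr : 0 < r) {p : ENNReal}
    {E : Set Ω} {X : ι → Ω → ℕ}
    (hX : ∀ v : ι → ℕ, μ {ω | ω ∈ E ∧ ∀ i, X i ω = v i} ≤
      if ∀ i, v i < r then p * (r : ENNReal)⁻¹ ^ Fintype.card ι else 0)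
    (A : Set (Setoid ι)) :
    μ {ω | ω ∈ E ∧ Setoid.ker (fun i => X i ω) ∈ A} ≤
      p * ENNReal.ofReal (partitionProb r A) := by
  rw [← sum_indicator_ker_eq_partitionProb hr, Finset.mul_sum]
  simp only [← Set.indicator_const_mul]
  exact measure_inter_samples_le_sum hX (Setoid.ker ⁻¹' A)

lemma measure_identify_le {a a' m : ℕ} (hne : a ≠ a') (ha' : 0 < a') (hm : m < a) (hm' : m ≤ a')
    {N : Ω → ℕ} {X : Fin m → Ω → ℕ} (hN : ∀ ω, N ω = a ∨ N ω = a')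
    (hX : ∀ r : ℕ, (r = a ∨ r = a') → ∀ v : Fin m → ℕ,
      μ {ω | N ω = r ∧ ∀ i, X i ω = v i} =
        if ∀ i, v i < r then (1 / 2) * (r : ENNReal)⁻¹ ^ m else 0)
    (g : Setoid (Fin m) → ℕ) :
    μ {ω | g (Setoid.ker fun i => X i ω) = N ω} ≤
      ENNReal.ofReal (1 / 2 + √(secondMomentGrowth a a' m ^ m - 1) / 4) := by
  have ha : 0 < a := (Nat.zero_le m).trans_lt hm
  set A : Set (Setoid (Fin m)) := {s | g s = a}
  have identify (r : ℕ) (hr : 0 < r) (hr' : r = a ∨ r = a') (B : Set (Setoid (Fin m))) :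
      μ {ω | N ω = r ∧ Setoid.ker (fun i => X i ω) ∈ B} ≤
        ENNReal.ofReal (1 / 2 * partitionProb r B) := by
    refine (measure_inter_ker_mem_le (E := {ω | N ω = r}) hr (p := 1 / 2) (fun v => ?_) B).trans_eq
      ?_
    · simpa only [Fintype.card_fin] using! (hX r hr' v).le
    · rw [ENNReal.ofReal_mul one_half_pos.le, ENNReal.ofReal_div_of_pos two_pos,
        ENNReal.ofReal_one, ENNReal.ofReal_ofNat]
  have advantage := partitionProb_sub_le ha' hm hm' Aᶜ
  rw [partitionProb_compl ha] at advantage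
  calc
    μ {ω | g (Setoid.ker fun i => X i ω) = N ω}
      ≤ μ ({ω | N ω = a ∧ Setoid.ker (fun i => X i ω) ∈ A} ∪
          {ω | N ω = a' ∧ Setoid.ker (fun i => X i ω) ∈ Aᶜ}) := by
        refine measure_mono fun ω hω => ?_
        rcases hN ω with h | h
        · exact Or.inl ⟨h, hω.trans h⟩
        · exact Or.inr ⟨h, fun h' => hne (h'.symm.trans (hω.trans h))⟩
    _ ≤ _ := measure_union_le _ _
    _ ≤ ENNReal.ofReal (1 / 2 * partitionProb a A) + ENNReal.ofReal (1 / 2 * partitionProb a' Aᶜ) :=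
        add_le_add (identify a ha (.inl rfl) A) (identify a' ha' (.inr rfl) Aᶜ)
    _ = ENNReal.ofReal (1 / 2 * partitionProb a A + 1 / 2 * partitionProb a' Aᶜ) :=
        (ENNReal.ofReal_add (mul_nonneg one_half_pos.le (partitionProb_nonneg a A))
          (mul_nonneg one_half_pos.le (partitionProb_nonneg a' Aᶜ))).symm
    _ ≤ _ := ENNReal.ofReal_le_ofReal (by linarith)

end Identification

section Asymptotics

lemma secondMomentGrowth_pow_le_exp (N N' m : ℕ) (hm : m ≤ N) :
    secondMomentGrowth N N' m ^ m ≤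
      Real.exp (((N : ℝ) - N') ^ 2 * m ^ 2 / (N' ^ 2 * (N - m))) := by
  calc
    secondMomentGrowth N N' m ^ m
      ≤ Real.exp (((N : ℝ) - N') ^ 2 * m / (N' ^ 2 * (N - m))) ^ m := by
        have := one_le_secondMomentGrowth (N' := N') hm
        gcongr
        rw [secondMomentGrowth, add_comm]
        exact Real.add_one_le_exp _
    _ = _ := by
        rw [← Real.exp_nat_mul]
        ring_nf

lemma le_mul_of_mul_div_sqrt_le {m n ε t : ℝ} (hm : 0 ≤ m) (hn : 0 < n) (hε : 1 / √n ≤ ε)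
    (ht : m * ε / √n ≤ t) : m ≤ t * n := by
  refine (div_le_iff₀ hn).1 ?_
  calc
    m / n = m * (1 / √n) / √n := by
      rw [mul_one_div, div_div, Real.mul_self_sqrt hn.le]
    _ ≤ m * ε / √n := by gcongr
    _ ≤ t := ht

lemma gap_sq_mul_div_le {n n' m ε c : ℝ} (hn : 0 < n) (hc : c < 1) (hε : ε ≤ c)
    (hn' : n' = (1 - ε) * n) (hm : m ≤ 1 / 2 * n) :
    (n - n') ^ 2 * m ^ 2 / (n' ^ 2 * (n - m)) ≤ 2 / (1 - c) ^ 2 * (m * ε / √n) ^ 2 := by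
  have hc' : 0 < 1 - c := sub_pos.2 hc
  have hn'c : (1 - c) * n ≤ n' := by
    rw [hn']
    gcongr
  calc
    (n - n') ^ 2 * m ^ 2 / (n' ^ 2 * (n - m))
      ≤ (n - n') ^ 2 * m ^ 2 / (((1 - c) * n) ^ 2 * (n / 2)) := by
        gcongr
        linarith
    _ = 2 / (1 - c) ^ 2 * (m * ε / √n) ^ 2 := by
        rw [hn', div_pow, Real.sq_sqrt hn.le]
        field_simp
        ring

lemma measure_identify_le_exp {Ω : Type*} [MeasurableSpace Ω] {μ : Measure Ω} {n n' m : ℕ}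
    {ε c : ℝ} (hc : c < 1) (hε : 1 / √(n : ℝ) ≤ ε) (hεc : ε ≤ c) (hn'_pos : 0 < n')
    (hn' : (n' : ℝ) = (1 - ε) * n) (hm_half : m * ε / √(n : ℝ) ≤ 1 / 2)
    (hm_c : m * ε / √(n : ℝ) ≤ 1 - c) {N : Ω → ℕ} {X : Fin m → Ω → ℕ}
    (hN : ∀ ω, N ω = n ∨ N ω = n')
    (hX : ∀ r : ℕ, (r = n ∨ r = n') → ∀ v : Fin m → ℕ,
      μ {ω | N ω = r ∧ ∀ i, X i ω = v i} =
        if ∀ i, v i < r then (1 / 2) * (r : ENNReal)⁻¹ ^ m else 0)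
    (g : Setoid (Fin m) → ℕ) :
    μ {ω | g (Setoid.ker fun i => X i ω) = N ω} ≤ ENNReal.ofReal
      (1 / 2 + √(Real.exp (2 / (1 - c) ^ 2 * (m * ε / √(n : ℝ)) ^ 2) - 1) / 4) := by
  have hn_pos : (0 : ℝ) < n := by
    refine n.cast_nonneg.lt_of_ne' fun h => ?_
    simp [h, hn'_pos.ne'] at hn'
  have hε_pos : 0 < ε := (by positivity : 0 < 1 / √(n : ℝ)).trans_le hε
  have hm_le_half := le_mul_of_mul_div_sqrt_le m.cast_nonneg hn_pos hε hm_half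
  have hm_lt : m < n := by
    rify
    linarith
  have hm_le : m ≤ n' := by
    rify
    calc
      (m : ℝ) ≤ (1 - c) * n := le_mul_of_mul_div_sqrt_le m.cast_nonneg hn_pos hε hm_c
      _ ≤ (1 - ε) * n := by gcongr
      _ = n' := hn'.symm
  have hne : n ≠ n' := by
    rintro rfl
    nlinarith
  refine (measure_identify_le hne hn'_pos hm_lt hm_le hN hX g).trans ?_
  gcongr
  exact (secondMomentGrowth_pow_le_exp _ _ _ hm_lt.le).trans
    (Real.exp_le_exp.2 (gap_sq_mul_div_le hn_pos hc hεc hn' hm_le_half))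

lemma tendsto_sqrt_exp_sq_sub_one_div_four {ι : Type*} {l : Filter ι} {x : ι → ℝ}
    (hx : Tendsto x l (nhds 0)) (C : ℝ) :
    Tendsto (fun k => √(Real.exp (C * x k ^ 2) - 1) / 4) l (nhds 0) := by
  have h : Continuous fun y : ℝ => √(Real.exp (C * y ^ 2) - 1) / 4 := by fun_prop
  exact (h.tendsto' 0 0 (by simp)).comp hx

end Asymptotics

theorem proportional_setting_lower_bound_general
    (n n' m : ℕ → ℕ) (ε : ℕ → ℝ) {c η : ℝ} (hc : c < 1) (hη : 0 < η)
    (hε : ∀ k, 1 / Real.sqrt (n k) ≤ ε k ∧ ε k ≤ c)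
    (hn' : ∀ k, 0 < n' k ∧ ((n' k : ℝ) = (1 - ε k) * n k))
    (hm : Tendsto (fun k => (m k : ℝ) * ε k / Real.sqrt (n k)) atTop (nhds 0)) :
    ∀ᶠ k in atTop,
      ∀ (Ω : Type*) (_ : MeasurableSpace Ω) (μ : Measure Ω)
        (N : Ω → ℕ) (X : Fin (m k) → Ω → ℕ),
        (∀ ω, N ω = n k ∨ N ω = n' k) →
        (∀ r : ℕ, (r = n k ∨ r = n' k) → ∀ v : Fin (m k) → ℕ,
          μ {ω | N ω = r ∧ ∀ i, X i ω = v i} =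
            if ∀ i, v i < r then (1 / 2) * ((r : ENNReal))⁻¹ ^ (m k) else 0) →
        ∀ g : Setoid (Fin (m k)) → ℕ,
          μ {ω | g (Setoid.ker (fun i => X i ω)) = N ω} ≤ ENNReal.ofReal (1 / 2 + η) := by
  filter_upwards [hm.eventually_le_const one_half_pos, hm.eventually_le_const (sub_pos.2 hc),
    (tendsto_sqrt_exp_sq_sub_one_div_four hm (2 / (1 - c) ^ 2)).eventually_le_const hη]
    with k hm_half hm_c hadv Ω _ μ N X hN hX g
  refine (measure_identify_le_exp hc (hε k).1 (hε k).2 (hn' k).1 (hn' k).2 hm_half hm_c hN hX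
    g).trans ?_
  gcongr

/-- (Lower bound for the proportional setting.)
For parameter sequences `(n_k, ε_k, m_k)` with `n_k → ∞`, `1/√(n_k) ≤ ε_k < 1/3`,
`(1−ε_k)·n_k = n'_k` a positive integer, and `m_k·ε_k/√(n_k) → 0`, the following holds
for all `k` large enough.  Let `N` be `n_k` or `n'_k` each with probability `1/2`;
conditionally on `N`, draw `m_k` i.i.d. uniform samples `X₁, …, X_{m_k}` from a set of
size `N`, and let `Π` be the partition of the index set into blocks of equal samples
(the kernel of `i ↦ X_i`).  Then every function `g` from partitions to `{n_k, n'_k}`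
identifies `N` correctly with probability at most `3/5`.  (Hence no algorithm in the
proportional-sampling model taking `o(√n/ε)` samples can `(1±ε)`-approximate the total
weight with probability `2/3`, even knowing `n`.) -/
theorem proportional_setting_lower_bound
    (n n' m : ℕ → ℕ) (ε : ℕ → ℝ)
    (hε : ∀ k, 1 / Real.sqrt (n k) ≤ ε k ∧ ε k < 1 / 3)
    (hn' : ∀ k, 0 < n' k ∧ ((n' k : ℝ) = (1 - ε k) * n k))
    (hn : Tendsto (fun k => (n k : ℝ)) atTop atTop)
    (hm : Tendsto (fun k => (m k : ℝ) * ε k / Real.sqrt (n k)) atTop (nhds 0)) :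
    ∀ᶠ k in atTop,
      ∀ (Ω : Type) (_ : MeasurableSpace Ω) (μ : Measure Ω) (_ : IsProbabilityMeasure μ)
        (N : Ω → ℕ) (X : Fin (m k) → Ω → ℕ),
        (∀ ω, N ω = n k ∨ N ω = n' k) →
        (∀ r : ℕ, (r = n k ∨ r = n' k) → ∀ v : Fin (m k) → ℕ,
          μ {ω | N ω = r ∧ ∀ i, X i ω = v i} =
            if ∀ i, v i < r then (1 / 2) * ((r : ENNReal))⁻¹ ^ (m k) else 0) →
        ∀ g : Setoid (Fin (m k)) → ℕ,
          μ {ω | g (Setoid.ker (fun i => X i ω)) = N ω} ≤ 3 / 5 := by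
  filter_upwards [proportional_setting_lower_bound_general n n' m ε (c := 1 / 3) (η := 1 / 10)
    (by norm_num) (by norm_num) (fun k => (hε k).imp_right le_of_lt) hn' hm]
    with k hk Ω _ μ _ N X hN hX g
  exact (hk Ω _ μ N X hN hX g).trans_eq (by norm_num [ENNReal.ofReal_div_of_pos])
end

section
/- Let n ≥ 2 and let X₁, X₂, … be i.i.d. random variables, each uniformly distributed on a finite set of size n. For 1 ≤ ℓ ≤ n, let T_ℓ = min{ i : |{X₁, …, X_i}| = ℓ } be the first time ℓ distinct elements have been sampled. Then P( ∃ ℓ ∈ {1, …, n−1} : T_{ℓ+1} − T_ℓ > 4·ℓ·ln(3ℓ) ) ≤ 1/3. Consequently, with probability at least 2/3, the sampling process that stops after ⌈4s·ln(3s)⌉ consecutive samples yield no new element (where s is the current number of distinct elements seen) outputs the entire set. -/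
open MeasureTheory ProbabilityTheory

/-!
If `T_{ℓ+1} - T_ℓ > m`, the sample sequence begins with a word that reaches its `ℓ`-th distinct
letter exactly at its end, followed by `m` letters all occurring in that word. For a fixed such word
`w`, a union bound over the continuations gives probability at most `n^{-|w|} (ℓ/n)^m`. These words
form a prefix code, so `∑ n^{-|w|} ≤ 1` by Kraft's inequality, and the gap exceeds `m` with
probability at most `(ℓ/n)^m`. For `m = ⌊4ℓ ln(3ℓ)⌋` this is at most `(1/3)(1/ℓ - 1/(ℓ+1))`, which
telescopes. Working with words and union bounds alone, no measurability of the samples is involved.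
-/

section Kraft

variable {α : Type*}

theorem uniquelyDecodable_of_isAntichain_isPrefix {S : Set (List α)} (hnil : [] ∉ S)
    (hS : IsAntichain (· <+: ·) S) : InformationTheory.UniquelyDecodable S := by
  have head_ne_nil {w : List α} {L : List (List α)} (hw : ∀ u ∈ w :: L, u ∈ S) : w ≠ [] :=
    fun h => hnil (h ▸ hw w List.mem_cons_self)
  intro L₁
  induction L₁ with
  | nil =>
    rintro (_ | ⟨v, L₂⟩) - h₂ h
    · rfl
    · exact absurd (List.append_eq_nil_iff.1 h.symm).1 (head_ne_nil h₂)
  | cons u L₁ ih =>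
    rintro (_ | ⟨v, L₂⟩) h₁ h₂ h
    · exact absurd (List.append_eq_nil_iff.1 h).1 (head_ne_nil h₁)
    · have huS : u ∈ S := h₁ u List.mem_cons_self
      have hvS : v ∈ S := h₂ v List.mem_cons_self
      rw [List.flatten_cons, List.flatten_cons] at h
      have huv : u = v := by
        have hu : u <+: v ++ L₂.flatten := h ▸ List.prefix_append u L₁.flatten
        rcases List.prefix_or_prefix_of_prefix hu (List.prefix_append v _) with hp | hp
        · exact hS.eq huS hvS hp
        · exact (hS.eq hvS huS hp).symm
      subst huv
      rw [ih L₂ (fun w hw => h₁ w (List.mem_cons_of_mem _ hw))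
        (fun w hw => h₂ w (List.mem_cons_of_mem _ hw)) (List.append_cancel_left h)]

theorem tsum_inv_card_pow_length_le_one [Fintype α] [Nonempty α] {S : Set (List α)}
    (hS : InformationTheory.UniquelyDecodable S) :
    ∑' w : S, (Fintype.card α : ENNReal)⁻¹ ^ w.1.length ≤ 1 := by
  rw [ENNReal.tsum_eq_iSup_sum]
  refine iSup_le fun F => ?_
  let C : Finset (List α) := F.map (Function.Embedding.subtype _)
  have hC : InformationTheory.UniquelyDecodable (C : Set (List α)) := by
    have hCS : ∀ w ∈ C, w ∈ S := fun w hw => Finset.property_of_mem_map_subtype F hw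
    exact fun L₁ L₂ h₁ h₂ => hS L₁ L₂ (fun w hw => hCS w (h₁ w hw)) (fun w hw => hCS w (h₂ w hw))
  have hcard : (Fintype.card α : ENNReal)⁻¹ = ENNReal.ofReal (1 / Fintype.card α) := by
    rw [one_div, ENNReal.ofReal_inv_of_pos (by positivity), ENNReal.ofReal_natCast]
  calc ∑ w ∈ F, (Fintype.card α : ENNReal)⁻¹ ^ w.1.length
      = ∑ w ∈ C, ENNReal.ofReal ((1 / Fintype.card α) ^ w.length) := by
        simp only [C, hcard, Finset.sum_map, Function.Embedding.subtype_apply,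
          ENNReal.ofReal_pow (by positivity : (0 : ℝ) ≤ 1 / Fintype.card α)]
    _ = ENNReal.ofReal (∑ w ∈ C, (1 / Fintype.card α : ℝ) ^ w.length) :=
        (ENNReal.ofReal_sum_of_nonneg fun _ _ => by positivity).symm
    _ ≤ 1 := ENNReal.ofReal_le_one.2 (InformationTheory.kraft_mcmillan_inequality hC)

end Kraft

section Collection

variable {U : Type*}

/-- The word formed by the first `k` terms of `x`. -/
def initialWord (x : ℕ → U) (k : ℕ) : List U :=
  (List.range k).map x

@[simp]
theorem length_initialWord (x : ℕ → U) (k : ℕ) : (initialWord x k).length = k := by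
  simp [initialWord]

theorem initialWord_succ (x : ℕ → U) (k : ℕ) :
    initialWord x (k + 1) = initialWord x k ++ [x k] := by
  simp [initialWord, List.range_succ]

theorem apply_eq_get_of_initialWord_eq {x : ℕ → U} {w : List U}
    (h : initialWord x w.length = w) (i : Fin w.length) : x i = w.get i := by
  have hi : i.1 < (initialWord x w.length).length := by simp
  calc x i = (initialWord x w.length)[i.1] := by simp [initialWord]
    _ = w.get i := List.getElem_of_eq h hi

theorem eq_initialWord_of_isPrefix {x : ℕ → U} {k : ℕ} {w : List U}
    (h : w <+: initialWord x k) : w.length ≤ k ∧ w = initialWord x w.length := by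
  have hle : w.length ≤ k := by simpa using h.length_le
  refine ⟨hle, ?_⟩
  conv_lhs => rw [List.prefix_iff_eq_take.1 h]
  simp [initialWord, ← List.map_take, List.take_range, hle]

variable [DecidableEq U]

/-- The set of distinct values among the first `k` terms of `x`. -/
def seen (x : ℕ → U) (k : ℕ) : Finset U :=
  (Finset.range k).image x

theorem toFinset_initialWord (x : ℕ → U) (k : ℕ) : (initialWord x k).toFinset = seen x k := by
  ext a
  simp [initialWord, seen]

theorem monotone_seen (x : ℕ → U) : Monotone (seen x) := fun _ _ h =>
  Finset.image_subset_image (Finset.range_subset_range.2 h)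

theorem card_seen_succ_le (x : ℕ → U) (k : ℕ) : (seen x (k + 1)).card ≤ (seen x k).card + 1 := by
  rw [seen, Finset.range_add_one, Finset.image_insert]
  exact Finset.card_insert_le _ _

theorem exists_le_card_seen_eq {x : ℕ → U} {l k : ℕ} (h : l ≤ (seen x k).card) :
    ∃ i ≤ k, (seen x i).card = l := by
  induction k with
  | zero => exact ⟨0, le_rfl, le_antisymm (by simp [seen]) h⟩
  | succ k ih =>
    rcases h.eq_or_lt with rfl | hlt
    · exact ⟨k + 1, le_rfl, rfl⟩
    · obtain ⟨i, hik, hi⟩ := ih (Nat.lt_succ_iff.1 (hlt.trans_le (card_seen_succ_le x k)))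
      exact ⟨i, hik.trans k.le_succ, hi⟩

/-- The first time at which exactly `l` distinct values of `x` have been seen, with value `0` when
this never happens. -/
noncomputable def collectionTime (x : ℕ → U) (l : ℕ) : ℕ :=
  sInf {i | (seen x i).card = l}

theorem collectionTime_le {x : ℕ → U} {l k : ℕ} (h : (seen x k).card = l) :
    collectionTime x l ≤ k :=
  Nat.sInf_le h

theorem collectionTime_add_floor_lt {x : ℕ → U} {l : ℕ} {a : ℝ}
    (ha : 0 ≤ a) (h : a < (collectionTime x (l + 1) : ℝ) - collectionTime x l) :
    collectionTime x l + ⌊a⌋₊ < collectionTime x (l + 1) := by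
  have : (collectionTime x l : ℝ) + ⌊a⌋₊ < collectionTime x (l + 1) := by
    linarith [Nat.floor_le ha]
  exact_mod_cast this

theorem card_seen_of_mem_Ico_collectionTime {x : ℕ → U} {l i : ℕ}
    (hi : i ∈ Set.Ico (collectionTime x l) (collectionTime x (l + 1))) :
    (seen x i).card = l := by
  have hl1 : (seen x (collectionTime x (l + 1))).card = l + 1 :=
    Nat.sInf_mem (Nat.nonempty_of_pos_sInf (i.zero_le.trans_lt hi.2))
  obtain ⟨j, -, hj⟩ := exists_le_card_seen_eq (l.le_succ.trans_eq hl1.symm)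
  have hl : (seen x (collectionTime x l)).card = l :=
    Nat.sInf_mem (s := {i | (seen x i).card = l}) ⟨j, hj⟩
  refine le_antisymm (Nat.lt_succ_iff.1 (lt_of_not_ge fun hlt => ?_))
    (hl.symm.trans_le (Finset.card_le_card (monotone_seen x hi.1)))
  obtain ⟨k, hki, hk⟩ := exists_le_card_seen_eq hlt
  exact (collectionTime_le hk).not_gt (hki.trans_lt hi.2)

/-- The words that reach their `l`-th distinct letter exactly at their end, encoded as the
prefix-minimal words with `l` distinct letters. -/
def arrivalWords (U : Type*) [DecidableEq U] (l : ℕ) : Set (List U) :=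
  {w | w.toFinset.card = l ∧ ∀ u, u <+: w → u.toFinset.card = l → u = w}

theorem isAntichain_arrivalWords (l : ℕ) : IsAntichain (· <+: ·) (arrivalWords U l) :=
  fun u hu _ hv huv hp => huv (hv.2 u hp hu.1)

theorem nil_notMem_arrivalWords {l : ℕ} (hl : l ≠ 0) : [] ∉ arrivalWords U l :=
  fun h => hl (by simpa using h.1.symm)

theorem initialWord_collectionTime_mem_arrivalWords {x : ℕ → U} {l : ℕ}
    (h : (seen x (collectionTime x l)).card = l) :
    initialWord x (collectionTime x l) ∈ arrivalWords U l := by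
  refine ⟨by rw [toFinset_initialWord, h], fun u hu hcard => ?_⟩
  obtain ⟨hle, hu⟩ := eq_initialWord_of_isPrefix hu
  rw [hu, toFinset_initialWord] at hcard
  rw [hu, hle.antisymm (collectionTime_le hcard)]

theorem mem_seen_collectionTime {x : ℕ → U} {l m j : ℕ} (hj : j < m)
    (h : collectionTime x l + m < collectionTime x (l + 1)) :
    x (collectionTime x l + j) ∈ seen x (collectionTime x l) := by
  set t := collectionTime x l
  have hcard (i : ℕ) (hi : i ≤ m) : (seen x (t + i)).card = l :=
    card_seen_of_mem_Ico_collectionTime ⟨by omega, by omega⟩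
  have heq : seen x t = seen x (t + m) :=
    Finset.eq_of_subset_of_card_le (monotone_seen x (by omega))
      ((hcard m le_rfl).trans (hcard 0 m.zero_le).symm).le
  rw [heq]
  exact Finset.mem_image_of_mem x (Finset.mem_range.2 (by omega))

end Collection

section Measure

variable {Ω U : Type*} [MeasurableSpace Ω] {μ : Measure Ω} {X : ℕ → Ω → U}

theorem measure_initialWord_eq_and_forall_mem_le {c : ENNReal}
    (hX : ∀ w : List U, μ {ω | initialWord (X · ω) w.length = w} ≤ c ^ w.length)
    (S : Finset U) (m : ℕ) (w : List U) :
    μ {ω | initialWord (X · ω) w.length = w ∧ ∀ j < m, X (w.length + j) ω ∈ S} ≤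
      (S.card * c) ^ m * c ^ w.length := by
  induction m generalizing w with
  | zero => simpa using hX w
  | succ m ih =>
    calc _ ≤ μ (⋃ a ∈ S, {ω | initialWord (X · ω) (w ++ [a]).length = w ++ [a] ∧
            ∀ j < m, X ((w ++ [a]).length + j) ω ∈ S}) := by
          refine measure_mono fun ω ⟨hw, hmem⟩ => Set.mem_biUnion (hmem 0 m.succ_pos) ⟨?_, ?_⟩
          · simp [initialWord_succ, hw]
          · intro j hj
            simpa [add_assoc, add_comm 1] using hmem (j + 1) (by omega)
      _ ≤ ∑ a ∈ S, (S.card * c) ^ m * c ^ (w ++ [a]).length :=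
          (measure_biUnion_finset_le _ _).trans (Finset.sum_le_sum fun a _ => ih _)
      _ = (S.card * c) ^ (m + 1) * c ^ w.length := by
          simp only [List.length_append, List.length_singleton, Finset.sum_const, nsmul_eq_mul]
          ring

variable [Fintype U] [Nonempty U] [DecidableEq U]

theorem measure_collectionTime_add_lt_le
    (hX : ∀ w : List U, μ {ω | initialWord (X · ω) w.length = w} ≤
      (Fintype.card U : ENNReal)⁻¹ ^ w.length)
    {l : ℕ} (hl : l ≠ 0) (m : ℕ) :
    μ {ω | collectionTime (X · ω) l + m < collectionTime (X · ω) (l + 1)} ≤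
      (l * (Fintype.card U : ENNReal)⁻¹) ^ m := by
  set c : ENNReal := (Fintype.card U : ENNReal)⁻¹
  calc _ ≤ μ (⋃ w : arrivalWords U l, {ω | initialWord (X · ω) w.1.length = w.1 ∧
          ∀ j < m, X (w.1.length + j) ω ∈ w.1.toFinset}) := by
        refine measure_mono fun ω hω => Set.mem_iUnion.2 ⟨⟨initialWord (X · ω) _,
          initialWord_collectionTime_mem_arrivalWords
            (card_seen_of_mem_Ico_collectionTime ⟨le_rfl, (Nat.le_add_right _ m).trans_lt hω⟩)⟩, ?_⟩
        simp only [length_initialWord, toFinset_initialWord]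
        exact ⟨rfl, fun j hj => mem_seen_collectionTime hj hω⟩
    _ ≤ ∑' w : arrivalWords U l, (l * c) ^ m * c ^ w.1.length := by
        refine (measure_iUnion_le _).trans (ENNReal.tsum_le_tsum fun w => ?_)
        simpa only [w.2.1] using
          measure_initialWord_eq_and_forall_mem_le hX w.1.toFinset m w.1
    _ = (l * c) ^ m * ∑' w : arrivalWords U l, c ^ w.1.length := ENNReal.tsum_mul_left
    _ ≤ (l * c) ^ m := by
        refine mul_le_of_le_one_right' (tsum_inv_card_pow_length_le_one ?_)
        exact uniquelyDecodable_of_isAntichain_isPrefix (nil_notMem_arrivalWords hl)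
          (isAntichain_arrivalWords l)

end Measure

section Estimate

open Real

theorem two_mul_log_add_le {x : ℝ} (hx : 1 ≤ x) :
    2 * log (3 * x) + 2 / 3 ≤ 4 * x * log (3 * x) * log (1 + x⁻¹) := by
  have hlog : 1 ≤ log (3 * x) :=
    (le_log_iff_exp_le (by linarith)).2 (exp_one_lt_three.le.trans (by linarith))
  -- The simpler bound `1 / (x + 1) ≤ log (1 + x⁻¹)` would be too weak at `x = 1`, where rounding
  -- the exponent `4 * x * log (3 * x)` down can cost a factor `1 + x⁻¹ = 2`.
  have hinv : 2 / (2 * x + 1) ≤ log (1 + x⁻¹) := by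
    convert le_log_one_add_of_nonneg (inv_nonneg.2 (zero_le_one.trans hx)) using 1
    field_simp
    ring
  calc 2 * log (3 * x) + 2 / 3 ≤ 8 / 3 * log (3 * x) := by linarith
    _ ≤ 4 * x * log (3 * x) * (2 / (2 * x + 1)) := by
        rw [mul_div_assoc', le_div_iff₀ (by linarith)]
        nlinarith
    _ ≤ 4 * x * log (3 * x) * log (1 + x⁻¹) := by gcongr

theorem mul_sq_le_one_add_inv_pow {x : ℝ} (hx : 1 ≤ x) {k : ℕ} (hk : 4 * x * log (3 * x) ≤ k) :
    15 * x ^ 2 ≤ (1 + x⁻¹) ^ k := by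
  have hinv : 0 < x⁻¹ := by positivity
  calc 15 * x ^ 2 = (3 * x) ^ 2 * (2 / 3 + 1) := by ring
    _ ≤ exp (2 * log (3 * x)) * exp (2 / 3) := by
        gcongr
        · rw [two_mul, exp_add, exp_log (by positivity), sq]
        · exact add_one_le_exp _
    _ = exp (2 * log (3 * x) + 2 / 3) := (exp_add _ _).symm
    _ ≤ exp (k * log (1 + x⁻¹)) := by
        refine exp_le_exp.2 ((two_mul_log_add_le hx).trans ?_)
        exact mul_le_mul_of_nonneg_right hk (log_nonneg (by linarith))
    _ = (1 + x⁻¹) ^ k := by rw [exp_nat_mul, exp_log (by positivity)]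

theorem div_add_one_pow_le {x : ℝ} (hx : 1 ≤ x) {k : ℕ} (hk : 4 * x * log (3 * x) ≤ k + 1) :
    (x / (x + 1)) ^ k ≤ 1 / 3 * (x⁻¹ - (x + 1)⁻¹) := by
  have hpow : 15 * x ^ 2 ≤ (1 + x⁻¹) ^ (k + 1) :=
    mul_sq_le_one_add_inv_pow hx (by exact_mod_cast hk)
  calc (x / (x + 1)) ^ k = (1 + x⁻¹) / (1 + x⁻¹) ^ (k + 1) := by
        have hinv : x / (x + 1) = (1 + x⁻¹)⁻¹ := by field_simp
        rw [hinv, inv_pow, pow_succ']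
        field_simp
    _ ≤ (1 + x⁻¹) / (15 * x ^ 2) := by gcongr
    _ ≤ 1 / 3 * (x⁻¹ - (x + 1)⁻¹) := by
        field_simp
        nlinarith

theorem sum_Ico_one_inv_sub_inv_le (n : ℕ) :
    ∑ l ∈ Finset.Ico 1 n, ((l : ℝ)⁻¹ - ((l : ℝ) + 1)⁻¹) ≤ 1 := by
  have htelescope := Finset.sum_range_sub' (fun l : ℕ => ((1 + l : ℕ) : ℝ)⁻¹) (n - 1)
  rw [Finset.sum_Ico_eq_sum_range]
  calc _ = ((1 + 0 : ℕ) : ℝ)⁻¹ - ((1 + (n - 1) : ℕ) : ℝ)⁻¹ := by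
        simpa only [Nat.cast_add, Nat.cast_one, add_assoc] using htelescope
    _ ≤ 1 := by
        rw [add_zero, Nat.cast_one, inv_one]
        exact sub_le_self _ (by positivity)

theorem div_pow_floor_le {l n : ℕ} (hl : l ∈ Finset.Ico 1 n) :
    ((l : ℝ) / n) ^ ⌊4 * (l : ℝ) * log (3 * l)⌋₊ ≤ 1 / 3 * ((l : ℝ)⁻¹ - ((l : ℝ) + 1)⁻¹) := by
  obtain ⟨hl1, hln⟩ := Finset.mem_Ico.1 hl
  have hln' : (l : ℝ) + 1 ≤ n := by exact_mod_cast hln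
  calc ((l : ℝ) / n) ^ ⌊4 * (l : ℝ) * log (3 * l)⌋₊
      ≤ ((l : ℝ) / (l + 1)) ^ ⌊4 * (l : ℝ) * log (3 * l)⌋₊ := by gcongr
    _ ≤ 1 / 3 * ((l : ℝ)⁻¹ - ((l : ℝ) + 1)⁻¹) :=
        div_add_one_pow_le (by exact_mod_cast hl1) (Nat.lt_floor_add_one _).le

theorem sum_div_pow_floor_le (n : ℕ) :
    ∑ l ∈ Finset.Ico 1 n, ((l : ℝ) / n) ^ ⌊4 * (l : ℝ) * log (3 * l)⌋₊ ≤ 1 / 3 :=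
  calc _ ≤ ∑ l ∈ Finset.Ico 1 n, 1 / 3 * ((l : ℝ)⁻¹ - ((l : ℝ) + 1)⁻¹) :=
        Finset.sum_le_sum fun _ hl => div_pow_floor_le hl
    _ = 1 / 3 * ∑ l ∈ Finset.Ico 1 n, ((l : ℝ)⁻¹ - ((l : ℝ) + 1)⁻¹) := (Finset.mul_sum ..).symm
    _ ≤ 1 / 3 := mul_le_of_le_one_right (by norm_num) (sum_Ico_one_inv_sub_inv_le n)

theorem sum_mul_inv_pow_floor_le (n : ℕ) :
    ∑ l ∈ Finset.Ico 1 n, ((l : ENNReal) * (n : ENNReal)⁻¹) ^ ⌊4 * (l : ℝ) * log (3 * l)⌋₊ ≤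
      1 / 3 := by
  have hdiv (l : ℕ) (hl : l ∈ Finset.Ico 1 n) :
      (l : ENNReal) * (n : ENNReal)⁻¹ = ENNReal.ofReal (l / n) := by
    have hn : 0 < n := Nat.zero_lt_of_lt (Finset.mem_Ico.1 hl).2
    rw [ENNReal.ofReal_div_of_pos (by positivity), ENNReal.ofReal_natCast, ENNReal.ofReal_natCast,
      div_eq_mul_inv]
  calc _ = ∑ l ∈ Finset.Ico 1 n, ENNReal.ofReal (((l : ℝ) / n) ^ ⌊4 * (l : ℝ) * log (3 * l)⌋₊) :=
        Finset.sum_congr rfl fun l hl => by rw [hdiv l hl, ENNReal.ofReal_pow (by positivity)]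
    _ = ENNReal.ofReal (∑ l ∈ Finset.Ico 1 n, ((l : ℝ) / n) ^ ⌊4 * (l : ℝ) * log (3 * l)⌋₊) :=
        (ENNReal.ofReal_sum_of_nonneg fun _ _ => by positivity).symm
    _ ≤ ENNReal.ofReal (1 / 3) := ENNReal.ofReal_le_ofReal (sum_div_pow_floor_le n)
    _ = 1 / 3 := by rw [ENNReal.ofReal_div_of_pos (by norm_num)]; simp

end Estimate

/-- (Coupon-collector waiting times.) Let `X₀, X₁, …` be i.i.d. uniform
samples from a set of size `n ≥ 2` and let `T_ℓ` be the first time at which `ℓ` distinct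
elements have been sampled.  Then
`P(∃ ℓ ∈ {1, …, n−1} : T_{ℓ+1} − T_ℓ > 4·ℓ·ln(3ℓ)) ≤ 1/3`, so with probability at least
`2/3` the stopping rule "stop after `4s·ln(3s)` consecutive samples with no new element"
retrieves the entire set. -/
theorem coupon_collector_waiting_times
    {Ω U : Type*} [MeasurableSpace Ω] (μ : Measure Ω) [IsProbabilityMeasure μ]
    [Fintype U] [DecidableEq U]
    (n : ℕ) (hn : 2 ≤ n) (hcard : Fintype.card U = n)
    (X : ℕ → Ω → U)
    (hlaw : ∀ (k : ℕ) (v : Fin k → U),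
      μ {ω | ∀ i : Fin k, X i.1 ω = v i} = ((n : ENNReal))⁻¹ ^ k)
    (T : ℕ → Ω → ℕ)
    (hT : ∀ l ω, T l ω = sInf {i | ((Finset.range i).image (fun j => X j ω)).card = l}) :
    μ {ω | ∃ l : ℕ, 1 ≤ l ∧ l ≤ n - 1 ∧
        (4 : ℝ) * l * Real.log (3 * l) < (T (l + 1) ω : ℝ) - (T l ω : ℝ)} ≤ 1 / 3 := by
  obtain rfl : T = fun l ω => collectionTime (X · ω) l := funext₂ hT
  have : Nonempty U := Fintype.card_pos_iff.1 (by omega)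
  let m (l : ℕ) : ℕ := ⌊(4 : ℝ) * l * Real.log (3 * l)⌋₊
  have hX (w : List U) : μ {ω | initialWord (X · ω) w.length = w} ≤
      (Fintype.card U : ENNReal)⁻¹ ^ w.length := by
    rw [hcard, ← hlaw _ w.get]
    exact measure_mono fun ω hω => apply_eq_get_of_initialWord_eq hω
  calc _ ≤ μ (⋃ l ∈ Finset.Ico 1 n,
          {ω | collectionTime (X · ω) l + m l < collectionTime (X · ω) (l + 1)}) := by
        refine measure_mono fun ω ⟨l, hl, hln, h⟩ => ?_
        have hlog : 0 ≤ Real.log (3 * l) := by exact_mod_cast Real.log_natCast_nonneg (3 * l)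
        exact Set.mem_biUnion (Finset.mem_Ico.2 ⟨hl, by omega⟩)
          (collectionTime_add_floor_lt (by positivity) h)
    _ ≤ ∑ l ∈ Finset.Ico 1 n, ((l : ENNReal) * (n : ENNReal)⁻¹) ^ m l := by
        refine (measure_biUnion_finset_le _ _).trans (Finset.sum_le_sum fun l hl => ?_)
        rw [← hcard]
        exact measure_collectionTime_add_lt_le hX (by grind) (m l)
    _ ≤ 1 / 3 := sum_mul_inv_pow_floor_le n
end
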